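/- Fix an integer r ≥ 2. There exists a constant C_r > 0 such that for all integers n ≥ 1, W_r(n) ≤ C_r / n^r. -/

import Mathlib

/-- The cycle structure of a permutation of `n` letters: the multiset of the lengths
of its disjoint cycles, including fixed points. -/
def cycleStruct {n : ℕ} (σ : Equiv.Perm (Fin n)) : Multiset ℕ :=
  σ.cycleType + Multiset.replicate (n - σ.cycleType.sum) 1

/-- W_r(n): the probability that `r` independent uniformly random permutations of `n`
letters all have the same cycle structure. -/
noncomputable def W (r n : ℕ) : ℝ :=
  (Nat.card {v : Fin r → Equiv.Perm (Fin n) //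
      ∀ i j, cycleStruct (v i) = cycleStruct (v j)} : ℝ) / (n.factorial : ℝ) ^ r

/-!
Grade the sum `W r n = ∑ z(μ)⁻ʳ` over partitions `μ` of `n`, with `z` the centralizer order, by the
number of cycles. Removing a cycle of length `j` in all possible ways shows that the part `w n k`
of the sum with `k` cycles satisfies `(k + 1) * w n (k + 1) ≤ ∑ j, j⁻ʳ * w (n - j) k`. For `2 ≤ r`
the sequence `(n + 1)⁻ʳ` reproduces itself, up to a constant `K`, under this convolution, so that
`w n k ≤ K ^ k / k! * (n + 1)⁻ʳ`. Summing over `k` gives `W r n ≤ exp K * (n + 1)⁻ʳ`.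
-/

open Finset
open scoped Nat

section Convolution

lemma sum_range_one_div_add_one_pow_le {r : ℕ} (hr : 2 ≤ r) (n : ℕ) :
    ∑ i ∈ range n, (1 / ((i : ℝ) + 1)) ^ r ≤ 2 := by
  calc ∑ i ∈ range n, (1 / ((i : ℝ) + 1)) ^ r
      ≤ ∑ i ∈ range n, (((i + 1 : ℕ) : ℝ) ^ 2)⁻¹ := by
        refine sum_le_sum fun i _ => ?_
        rw [← inv_pow, Nat.cast_add_one, ← one_div]
        exact pow_le_pow_of_le_one (by positivity)
          ((div_le_one (by positivity)).2 (le_add_of_nonneg_left i.cast_nonneg)) hr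
    _ = ∑ j ∈ Ioo 0 (n + 1), ((j : ℝ) ^ 2)⁻¹ := by
        rw [range_eq_Ico, sum_Ico_add' (fun j : ℕ => ((j : ℝ) ^ 2)⁻¹), zero_add]
        rfl
    _ ≤ 2 := by simpa using sum_Ioo_inv_sq_le (α := ℝ) 0 (n + 1)

lemma one_div_pow_mul_one_div_pow_le {x y : ℝ} (hx : 0 < x) (hy : 0 < y) (r : ℕ) :
    (1 / x) ^ r * (1 / y) ^ r ≤ 2 ^ (r - 1) * (1 / (x + y)) ^ r * ((1 / x) ^ r + (1 / y) ^ r) := by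
  calc (1 / x) ^ r * (1 / y) ^ r = (1 / (x + y)) ^ r * (1 / x + 1 / y) ^ r := by
        rw [← mul_pow, ← mul_pow]
        congr 1
        field_simp
        ring
    _ ≤ (1 / (x + y)) ^ r * (2 ^ (r - 1) * ((1 / x) ^ r + (1 / y) ^ r)) := by
        gcongr
        exact add_pow_le (by positivity) (by positivity) r
    _ = 2 ^ (r - 1) * (1 / (x + y)) ^ r * ((1 / x) ^ r + (1 / y) ^ r) := by ring

lemma sum_antidiagonal_one_div_pow_mul_one_div_pow_le {r : ℕ} (hr : 2 ≤ r) (n : ℕ) :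
    ∑ p ∈ antidiagonal n, (1 / ((p.1 : ℝ) + 1)) ^ r * (1 / ((p.2 : ℝ) + 1)) ^ r ≤
      2 ^ (r + 1) * (1 / ((n : ℝ) + 2)) ^ r := by
  have hfst : ∑ p ∈ antidiagonal n, (1 / ((p.1 : ℝ) + 1)) ^ r ≤ 2 := by
    rw [Nat.sum_antidiagonal_eq_sum_range_succ_mk]
    exact sum_range_one_div_add_one_pow_le hr _
  have hsnd : ∑ p ∈ antidiagonal n, (1 / ((p.2 : ℝ) + 1)) ^ r ≤ 2 := by
    rwa [← Nat.sum_antidiagonal_swap]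
  calc ∑ p ∈ antidiagonal n, (1 / ((p.1 : ℝ) + 1)) ^ r * (1 / ((p.2 : ℝ) + 1)) ^ r
      ≤ ∑ p ∈ antidiagonal n, 2 ^ (r - 1) * (1 / ((n : ℝ) + 2)) ^ r *
          ((1 / ((p.1 : ℝ) + 1)) ^ r + (1 / ((p.2 : ℝ) + 1)) ^ r) := by
        refine sum_le_sum fun p hp => ?_
        have hn : (n : ℝ) + 2 = (p.1 + 1) + (p.2 + 1) := by
          rw [← mem_antidiagonal.1 hp]
          push_cast
          ring
        rw [hn]
        exact one_div_pow_mul_one_div_pow_le (by positivity) (by positivity) r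
    _ = 2 ^ (r - 1) * (1 / ((n : ℝ) + 2)) ^ r * (∑ p ∈ antidiagonal n, (1 / ((p.1 : ℝ) + 1)) ^ r +
          ∑ p ∈ antidiagonal n, (1 / ((p.2 : ℝ) + 1)) ^ r) := by
        rw [← mul_sum, sum_add_distrib]
    _ ≤ 2 ^ (r - 1) * (1 / ((n : ℝ) + 2)) ^ r * (2 + 2) := by gcongr
    _ = 2 ^ (r + 1) * (1 / ((n : ℝ) + 2)) ^ r := by
        obtain ⟨q, rfl⟩ := Nat.exists_eq_add_of_le' (one_le_two.trans hr)
        rw [Nat.add_sub_cancel]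
        ring

end Convolution

section CentralizerOrder

/-- The order `∏ j, j ^ mⱼ * mⱼ!` of the centralizer of a permutation whose cycle structure is `m`,
where `mⱼ` is the multiplicity of `j` in `m`. -/
def centralizerOrder (m : Multiset ℕ) : ℕ := m.prod * ∏ j ∈ m.toFinset, (m.count j)!

lemma centralizerOrder_cons (j : ℕ) (m : Multiset ℕ) :
    centralizerOrder (j ::ₘ m) = j * (m.count j + 1) * centralizerOrder m := by
  have hfactorial : ∏ i ∈ (j ::ₘ m).toFinset, ((j ::ₘ m).count i)! =
      (m.count j + 1) * ∏ i ∈ m.toFinset, (m.count i)! := by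
    have hj : j ∈ (j ::ₘ m).toFinset := by simp
    have hsub : m.toFinset ⊆ (j ::ₘ m).toFinset := by simp [subset_insert]
    have hextend : ∏ i ∈ m.toFinset, (m.count i)! = ∏ i ∈ (j ::ₘ m).toFinset, (m.count i)! :=
      prod_subset hsub fun i _ hi => by
        rw [Multiset.count_eq_zero_of_notMem (by simpa using hi), Nat.factorial_zero]
    rw [hextend, ← mul_prod_erase _ _ hj, ← mul_prod_erase _ (fun i => (m.count i)!) hj,
      Multiset.count_cons_self, Nat.factorial_succ, mul_assoc]
    congr 2
    refine prod_congr rfl fun i hi => ?_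
    rw [Multiset.count_cons_of_ne (ne_of_mem_erase hi)]
  rw [centralizerOrder, centralizerOrder, hfactorial, Multiset.prod_cons]
  ring

lemma centralizerOrder_add_replicate_one {m : Multiset ℕ} (hm : 1 ∉ m) (k : ℕ) :
    centralizerOrder (m + Multiset.replicate k 1) = k ! * centralizerOrder m := by
  induction k with
  | zero => simp
  | succ k ih =>
    rw [Multiset.replicate_succ, Multiset.add_cons, centralizerOrder_cons, ih, Nat.factorial_succ,
      Multiset.count_add, Multiset.count_eq_zero_of_notMem hm, Multiset.count_replicate_self]
    ring

lemma centralizerOrder_eq_mul_erase {m : Multiset ℕ} {j : ℕ} (hj : j ∈ m) :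
    centralizerOrder m = j * m.count j * centralizerOrder (m.erase j) := by
  conv_lhs => rw [← Multiset.cons_erase hj]
  rw [centralizerOrder_cons, Multiset.count_erase_self,
    Nat.sub_add_cancel (Multiset.one_le_count_iff_mem.2 hj)]

lemma count_mul_one_div_centralizerOrder_pow_le {m : Multiset ℕ} {j r : ℕ} (hj : j ∈ m)
    (hr : r ≠ 0) :
    (m.count j : ℝ) * (1 / (centralizerOrder m : ℝ)) ^ r ≤
      (1 / (j : ℝ)) ^ r * (1 / (centralizerOrder (m.erase j) : ℝ)) ^ r := by
  have hcount : (1 : ℝ) ≤ m.count j := by exact_mod_cast Multiset.one_le_count_iff_mem.2 hj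
  have hcount_pow : (m.count j : ℝ) * (1 / (m.count j : ℝ)) ^ r ≤ 1 := by
    rw [one_div_pow, mul_one_div]
    exact div_le_one_of_le₀ (le_self_pow₀ hcount hr) (by positivity)
  calc (m.count j : ℝ) * (1 / (centralizerOrder m : ℝ)) ^ r
      = (m.count j : ℝ) * (1 / (m.count j : ℝ)) ^ r *
          ((1 / (j : ℝ)) ^ r * (1 / (centralizerOrder (m.erase j) : ℝ)) ^ r) := by
        rw [centralizerOrder_eq_mul_erase hj, mul_assoc _ (_ ^ r), ← mul_pow, ← mul_pow]
        push_cast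
        congr 2
        ring
    _ ≤ (1 / (j : ℝ)) ^ r * (1 / (centralizerOrder (m.erase j) : ℝ)) ^ r :=
        mul_le_of_le_one_left (by positivity) hcount_pow

lemma card_mul_one_div_centralizerOrder_pow_le (m : Multiset ℕ) {r : ℕ} (hr : r ≠ 0) :
    (m.card : ℝ) * (1 / (centralizerOrder m : ℝ)) ^ r ≤
      ∑ j ∈ m.toFinset, (1 / (j : ℝ)) ^ r * (1 / (centralizerOrder (m.erase j) : ℝ)) ^ r := by
  rw [← m.toFinset_sum_count_eq, Nat.cast_sum, sum_mul]
  exact sum_le_sum fun j hj =>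
    count_mul_one_div_centralizerOrder_pow_le (Multiset.mem_toFinset.1 hj) hr

end CentralizerOrder

section CycleStructure

variable {n : ℕ}

/-- The cycle structure of a permutation of `n` letters, bundled as a partition of `n`.
`Equiv.Perm.partition` would instead give a partition of `Fintype.card (Fin n)`. -/
def cyclePartition (σ : Equiv.Perm (Fin n)) : n.Partition where
  parts := cycleStruct σ
  parts_pos hi := by
    rcases Multiset.mem_add.1 hi with hi | hi
    · exact zero_lt_one.trans (Equiv.Perm.one_lt_of_mem_cycleType hi)
    · exact Multiset.eq_of_mem_replicate hi ▸ zero_lt_one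
  parts_sum := by
    have hle : σ.cycleType.sum ≤ n := by simpa using σ.sum_cycleType_le
    simp [cycleStruct, hle]

lemma filter_two_le_parts_add_replicate_one (μ : n.Partition) :
    μ.parts.filter (2 ≤ ·) + Multiset.replicate (n - (μ.parts.filter (2 ≤ ·)).sum) 1 =
      μ.parts := by
  have hones : μ.parts.filter (¬ 2 ≤ ·) = Multiset.replicate (μ.parts.count 1) 1 := by
    rw [← Multiset.filter_eq']
    refine Multiset.filter_congr fun i hi => ?_
    have := μ.parts_pos hi
    omega
  have hsplit := Multiset.filter_add_not (2 ≤ ·) μ.parts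
  rw [hones] at hsplit
  have hsum : (μ.parts.filter (2 ≤ ·)).sum + μ.parts.count 1 = n := by
    simpa [μ.parts_sum] using congrArg Multiset.sum hsplit
  rwa [← Nat.sub_eq_of_eq_add' hsum.symm] at hsplit

lemma cyclePartition_eq_iff {σ : Equiv.Perm (Fin n)} {μ : n.Partition} :
    cyclePartition σ = μ ↔ σ.cycleType = μ.parts.filter (2 ≤ ·) := by
  constructor
  · rintro rfl
    have := σ.filter_parts_partition_eq_cycleType
    rw [Equiv.Perm.parts_partition, ← Equiv.Perm.sum_cycleType, Fintype.card_fin] at this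
    exact this.symm
  · intro h
    ext1
    rw [← filter_two_le_parts_add_replicate_one μ, ← h]
    rfl

lemma card_cyclePartition_eq_mul_centralizerOrder (μ : n.Partition) :
    #{σ | cyclePartition σ = μ} * centralizerOrder μ.parts = n ! := by
  let m := μ.parts.filter (2 ≤ ·)
  have hsum : m.sum ≤ n := by
    calc m.sum ≤ m.sum + (μ.parts.filter (¬ 2 ≤ ·)).sum := Nat.le_add_right _ _
      _ = n := by rw [Multiset.sum_filter_add_sum_filter_not, μ.parts_sum]
  have horder : centralizerOrder μ.parts = (n - m.sum)! * centralizerOrder m := by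
    rw [← filter_two_le_parts_add_replicate_one μ]
    exact centralizerOrder_add_replicate_one (by simp) _
  have hcard := Equiv.Perm.card_of_cycleType_mul_eq (Fin n) m
  rw [Fintype.card_fin, if_pos ⟨hsum, fun _ => Multiset.of_mem_filter⟩] at hcard
  simp_rw [cyclePartition_eq_iff, horder, centralizerOrder, ← mul_assoc]
  simpa only [mul_assoc] using hcard

lemma card_forall_apply_eq_apply {ι α β : Type*} [Fintype ι] [Nonempty ι] [Fintype α] [Fintype β]
    [DecidableEq β] (f : α → β) :
    Nat.card {v : ι → α // ∀ i j, f (v i) = f (v j)} =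
      ∑ b, #{a | f a = b} ^ Fintype.card ι := by
  classical
  obtain ⟨i₀⟩ := ‹Nonempty ι›
  rw [Nat.card_eq_fintype_card, Fintype.card_subtype,
    card_eq_sum_card_fiberwise (f := fun v => f (v i₀)) fun _ _ => mem_univ _]
  refine sum_congr rfl fun b _ => ?_
  have hfiber : {v ∈ ({v | ∀ i j, f (v i) = f (v j)} : Finset (ι → α)) | f (v i₀) = b} =
      Fintype.piFinset fun _ => {a | f a = b} := by
    ext v
    simp only [mem_filter, mem_univ, true_and, Fintype.mem_piFinset]
    exact ⟨fun ⟨hconst, hb⟩ i => (hconst i i₀).trans hb, fun h => ⟨fun i j => by rw [h, h], h i₀⟩⟩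
  rw [hfiber, Fintype.card_piFinset, prod_const, card_univ]

lemma W_eq_sum_one_div_centralizerOrder_pow {r : ℕ} (hr : r ≠ 0) (n : ℕ) :
    W r n = ∑ μ : n.Partition, (1 / (centralizerOrder μ.parts : ℝ)) ^ r := by
  have : NeZero r := ⟨hr⟩
  have hcard : Nat.card {v : Fin r → Equiv.Perm (Fin n) //
      ∀ i j, cycleStruct (v i) = cycleStruct (v j)} =
        ∑ μ : n.Partition, #{σ | cyclePartition σ = μ} ^ r := by
    have h := card_forall_apply_eq_apply (ι := Fin r) (cyclePartition (n := n))
    rw [Fintype.card_fin] at h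
    simp_rw [← h, Nat.Partition.ext_iff]
    rfl
  rw [W, hcard, Nat.cast_sum, sum_div]
  refine sum_congr rfl fun μ _ => ?_
  have hmul : (#{σ | cyclePartition σ = μ} : ℝ) * centralizerOrder μ.parts = n ! := by
    exact_mod_cast card_cyclePartition_eq_mul_centralizerOrder μ
  have hcard_ne_zero : (#{σ | cyclePartition σ = μ} : ℝ) ≠ 0 :=
    left_ne_zero_of_mul (hmul ▸ Nat.cast_ne_zero.2 n.factorial_ne_zero)
  rw [Nat.cast_pow, ← div_pow, ← hmul, div_mul_cancel_left₀ hcard_ne_zero, one_div]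

end CycleStructure

section CycleCount

lemma sum_partition_filter_mem_erase {M : Type*} [AddCommMonoid M] {n j : ℕ} (hj : 1 ≤ j)
    (hjn : j ≤ n) (f : Multiset ℕ → M) :
    ∑ μ : n.Partition with j ∈ μ.parts, f (μ.parts.erase j) =
      ∑ ν : (n - j).Partition, f ν.parts := by
  rw [← sum_subtype_eq_sum_filter, subtype_univ]
  exact Fintype.sum_equiv (Nat.Partition.partitionWithPartEquiv hj hjn) _ _ fun _ => rfl

lemma sum_partition_sum_erase_part {M : Type*} [AddCommMonoid M] (n : ℕ)
    (g : ℕ → Multiset ℕ → M) :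
    ∑ μ : (n + 1).Partition, ∑ j ∈ μ.parts.toFinset, g j (μ.parts.erase j) =
      ∑ p ∈ antidiagonal n, ∑ ν : p.2.Partition, g (p.1 + 1) ν.parts := by
  calc ∑ μ : (n + 1).Partition, ∑ j ∈ μ.parts.toFinset, g j (μ.parts.erase j)
      = ∑ j ∈ Ico 1 (n + 2), ∑ μ : (n + 1).Partition with j ∈ μ.parts, g j (μ.parts.erase j) := by
        refine sum_comm' fun μ j => ?_
        have hle : j ∈ μ.parts → 1 ≤ j ∧ j < n + 2 := fun hj =>
          ⟨μ.parts_pos hj, Nat.lt_succ_of_le (Nat.Partition.le_of_mem_parts hj)⟩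
        simpa using hle
    _ = ∑ j ∈ Ico 1 (n + 2), ∑ ν : (n + 1 - j).Partition, g j ν.parts := by
        refine sum_congr rfl fun j hj => ?_
        have := mem_Ico.1 hj
        exact sum_partition_filter_mem_erase (by omega) (by omega) (g j)
    _ = ∑ p ∈ antidiagonal n, ∑ ν : p.2.Partition, g (p.1 + 1) ν.parts := by
        rw [sum_Ico_eq_sum_range, Nat.sum_antidiagonal_eq_sum_range_succ_mk]
        refine sum_congr rfl fun i _ => ?_
        rw [Nat.add_comm 1 i, Nat.add_sub_add_right]

/-- The contribution to `W r n`, for `r ≠ 0`, of the tuples of permutations with exactly `k` cycles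
each, fixed points included, written as a sum over the partitions of `n` into `k` parts. -/
noncomputable def cycleCountWeight (r n k : ℕ) : ℝ :=
  ∑ μ : n.Partition with μ.parts.card = k, (1 / (centralizerOrder μ.parts : ℝ)) ^ r

lemma W_eq_sum_cycleCountWeight {r : ℕ} (hr : r ≠ 0) (n : ℕ) :
    W r n = ∑ k ∈ range (n + 1), cycleCountWeight r n k := by
  rw [W_eq_sum_one_div_centralizerOrder_pow hr]
  refine (sum_fiberwise_of_maps_to (fun μ _ => mem_range_succ_iff.2 ?_) _).symm
  calc μ.parts.card = μ.parts.card • 1 := by simp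
    _ ≤ μ.parts.sum := Multiset.card_nsmul_le_sum fun _ => μ.parts_pos
    _ = n := μ.parts_sum

lemma cycleCountWeight_zero_right_le (r n : ℕ) :
    cycleCountWeight r n 0 ≤ (1 / ((n : ℝ) + 1)) ^ r := by
  rcases n.eq_zero_or_pos with rfl | hn
  · simp [cycleCountWeight, centralizerOrder]
  · have hempty : ∀ μ : n.Partition, μ.parts.card ≠ 0 := fun μ hμ => by
      rw [← μ.parts_sum, Multiset.card_eq_zero.1 hμ] at hn
      exact hn.ne' Multiset.sum_zero
    rw [cycleCountWeight, filter_false_of_mem fun μ _ => hempty μ, sum_empty]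
    positivity

lemma cycleCountWeight_zero_succ (r k : ℕ) : cycleCountWeight r 0 (k + 1) = 0 := by
  simp [cycleCountWeight]

lemma succ_mul_cycleCountWeight_succ_le {r : ℕ} (hr : r ≠ 0) (n k : ℕ) :
    (k + 1 : ℝ) * cycleCountWeight r (n + 1) (k + 1) ≤
      ∑ p ∈ antidiagonal n, (1 / ((p.1 : ℝ) + 1)) ^ r * cycleCountWeight r p.2 k := by
  let g (j : ℕ) (m : Multiset ℕ) : ℝ :=
    (1 / (j : ℝ)) ^ r * if m.card = k then (1 / (centralizerOrder m : ℝ)) ^ r else 0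
  have hremove (μ : (n + 1).Partition) (hμ : μ.parts.card = k + 1) :
      (k + 1 : ℝ) * (1 / (centralizerOrder μ.parts : ℝ)) ^ r ≤
        ∑ j ∈ μ.parts.toFinset, g j (μ.parts.erase j) := by
    calc (k + 1 : ℝ) * (1 / (centralizerOrder μ.parts : ℝ)) ^ r
        = (μ.parts.card : ℝ) * (1 / (centralizerOrder μ.parts : ℝ)) ^ r := by
          rw [hμ, Nat.cast_add_one]
      _ ≤ ∑ j ∈ μ.parts.toFinset,
            (1 / (j : ℝ)) ^ r * (1 / (centralizerOrder (μ.parts.erase j) : ℝ)) ^ r :=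
          card_mul_one_div_centralizerOrder_pow_le _ hr
      _ = ∑ j ∈ μ.parts.toFinset, g j (μ.parts.erase j) := sum_congr rfl fun j hj => by
          have hcard : (μ.parts.erase j).card = k := by
            simp [Multiset.card_erase_of_mem (Multiset.mem_toFinset.1 hj), hμ]
          simp only [g, if_pos hcard]
  have hg_nonneg (j : ℕ) (m : Multiset ℕ) : 0 ≤ g j m := by
    simp only [g]
    positivity
  calc (k + 1 : ℝ) * cycleCountWeight r (n + 1) (k + 1)
      ≤ ∑ μ : (n + 1).Partition with μ.parts.card = k + 1,
          ∑ j ∈ μ.parts.toFinset, g j (μ.parts.erase j) := by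
        rw [cycleCountWeight, mul_sum]
        exact sum_le_sum fun μ hμ => hremove μ (mem_filter.1 hμ).2
    _ ≤ ∑ μ : (n + 1).Partition, ∑ j ∈ μ.parts.toFinset, g j (μ.parts.erase j) :=
        sum_le_sum_of_subset_of_nonneg (filter_subset _ _) fun μ _ _ =>
          sum_nonneg fun j _ => hg_nonneg j _
    _ = ∑ p ∈ antidiagonal n, ∑ ν : p.2.Partition, g (p.1 + 1) ν.parts :=
        sum_partition_sum_erase_part n g
    _ = ∑ p ∈ antidiagonal n, (1 / ((p.1 : ℝ) + 1)) ^ r * cycleCountWeight r p.2 k := by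
        simp only [g, cycleCountWeight, mul_sum, sum_filter, Nat.cast_add_one]

lemma cycleCountWeight_le {r : ℕ} (hr : 2 ≤ r) (n k : ℕ) :
    cycleCountWeight r n k ≤ (2 ^ (r + 1)) ^ k / k ! * (1 / ((n : ℝ) + 1)) ^ r := by
  induction k generalizing n with
  | zero => simpa using cycleCountWeight_zero_right_le r n
  | succ k ih =>
    rcases n with _ | n
    · rw [cycleCountWeight_zero_succ]
      positivity
    set K : ℝ := 2 ^ (r + 1)
    have hmul : (k + 1 : ℝ) * cycleCountWeight r (n + 1) (k + 1) ≤
        K ^ k / k ! * (K * (1 / ((n : ℝ) + 2)) ^ r) := by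
      calc (k + 1 : ℝ) * cycleCountWeight r (n + 1) (k + 1)
          ≤ ∑ p ∈ antidiagonal n, (1 / ((p.1 : ℝ) + 1)) ^ r * cycleCountWeight r p.2 k :=
            succ_mul_cycleCountWeight_succ_le (by omega) n k
        _ ≤ ∑ p ∈ antidiagonal n,
              (1 / ((p.1 : ℝ) + 1)) ^ r * (K ^ k / k ! * (1 / ((p.2 : ℝ) + 1)) ^ r) :=
            sum_le_sum fun p _ => by grw [ih p.2]
        _ = K ^ k / k ! * ∑ p ∈ antidiagonal n,
              (1 / ((p.1 : ℝ) + 1)) ^ r * (1 / ((p.2 : ℝ) + 1)) ^ r := by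
            simp only [mul_sum, mul_left_comm]
        _ ≤ K ^ k / k ! * (K * (1 / ((n : ℝ) + 2)) ^ r) := by
            gcongr
            exact sum_antidiagonal_one_div_pow_mul_one_div_pow_le hr n
    calc cycleCountWeight r (n + 1) (k + 1)
        ≤ K ^ k / k ! * (K * (1 / ((n : ℝ) + 2)) ^ r) / (k + 1) := by
          rwa [le_div_iff₀' (by positivity)]
      _ = K ^ (k + 1) / (k + 1)! * (1 / (((n + 1 : ℕ) : ℝ) + 1)) ^ r := by
          rw [Nat.factorial_succ, Nat.cast_add_one, add_assoc (n : ℝ), one_add_one_eq_two]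
          push_cast
          field_simp
          ring

end CycleCount

theorem stmt_15 (r : ℕ) (hr : 2 ≤ r) :
    ∃ C : ℝ, 0 < C ∧ ∀ n : ℕ, 1 ≤ n → W r n ≤ C / (n : ℝ) ^ r := by
  refine ⟨Real.exp (2 ^ (r + 1)), Real.exp_pos _, fun n hn => ?_⟩
  have : (0 : ℝ) < n := by exact_mod_cast hn
  calc W r n = ∑ k ∈ range (n + 1), cycleCountWeight r n k :=
        W_eq_sum_cycleCountWeight (by omega) n
    _ ≤ ∑ k ∈ range (n + 1), (2 ^ (r + 1)) ^ k / k ! * (1 / ((n : ℝ) + 1)) ^ r :=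
        sum_le_sum fun k _ => cycleCountWeight_le hr n k
    _ = (∑ k ∈ range (n + 1), ((2 : ℝ) ^ (r + 1)) ^ k / k !) * (1 / ((n : ℝ) + 1)) ^ r := by
        rw [sum_mul]
    _ ≤ Real.exp (2 ^ (r + 1)) * (1 / (n : ℝ)) ^ r := by
        gcongr
        · exact Real.sum_le_exp_of_nonneg (by positivity) _
        · linarith
    _ = Real.exp (2 ^ (r + 1)) / (n : ℝ) ^ r := by rw [one_div_pow, mul_one_div]
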